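/- arXiv:1301.0130 — 2 statements merged into one kernel-verified Lean document; each statement's English description precedes it below -/
import Mathlib

section
/- Let c be the unique real number satisfying e^{-c} = c. Then for every real number q > 1, one has (cq - 1)·ln(1 - 1/q) - ln(c) = Σ_{n=1}^∞ (1/n - c/(n+1))·(1/q)^n, and in particular (cq - 1)·ln(1 - 1/q) - ln(c) > 0. -/
/-!
Write `x = 1 / q`. Subtracting from the series `-log (1 - x) = ∑ xⁿ⁺¹ / (n + 1)` a multiple `c / x`
of its tail without the leading term `x` gives
`∑ (1 / (n + 1) - c / (n + 2)) xⁿ⁺¹ = (c / x - 1) log (1 - x) + c` for every real `c`, and for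
`c ≤ 1` and `x > 0` this is a sum of positive terms. The equation `e⁻ᶜ = c` identifies the constant
`c` with `-log c` and forces `c < 1`.
-/

theorem lt_one_of_exp_neg_eq_self {c : ℝ} (hc : Real.exp (-c) = c) : c < 1 := by
  have c_pos : 0 < c := hc ▸ Real.exp_pos (-c)
  calc
    c = Real.exp (-c) := hc.symm
    _ < 1 := Real.exp_lt_one_iff.mpr (neg_lt_zero.mpr c_pos)

theorem one_div_sub_div_pos {K : Type*} [Field K] [LinearOrder K] [IsStrictOrderedRing K]
    {c : K} (hc : c ≤ 1) (n : ℕ) : 0 < 1 / (n + 1 : K) - c / (n + 2) := by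
  refine sub_pos.mpr ?_
  calc
    c / (n + 2 : K) ≤ 1 / (n + 2) := by gcongr
    _ < 1 / (n + 1) := by gcongr; exact one_lt_two

theorem hasSum_pow_succ_div_add_two {x : ℝ} (hx₀ : x ≠ 0) (hx : |x| < 1) :
    HasSum (fun n : ℕ ↦ x ^ (n + 1) / (n + 2)) (-Real.log (1 - x) / x - 1) := by
  have tail : HasSum (fun n : ℕ ↦ x ^ (n + 2) / (n + 2)) (-Real.log (1 - x) - x) := by
    simpa [add_assoc, one_add_one_eq_two] using
      (hasSum_nat_add_iff' 1).mpr (Real.hasSum_pow_div_log_of_abs_lt_one hx)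
  convert! tail.div_const x using 1
  · funext n
    rw [div_right_comm, pow_succ x (n + 1), mul_div_cancel_right₀ _ hx₀]
  · field_simp

theorem hasSum_one_div_sub_div_mul_pow (c : ℝ) {x : ℝ} (hx₀ : x ≠ 0) (hx : |x| < 1) :
    HasSum (fun n : ℕ ↦ (1 / (n + 1 : ℝ) - c / (n + 2)) * x ^ (n + 1))
      ((c / x - 1) * Real.log (1 - x) + c) := by
  convert! (Real.hasSum_pow_div_log_of_abs_lt_one hx).sub
    ((hasSum_pow_succ_div_add_two hx₀ hx).mul_left c) using 1
  · funext n
    ring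
  · ring

theorem div_sub_one_mul_log_add_pos {c x : ℝ} (hc : c ≤ 1) (hx₀ : 0 < x) (hx₁ : x < 1) :
    0 < (c / x - 1) * Real.log (1 - x) + c := by
  have series := hasSum_one_div_sub_div_mul_pow c hx₀.ne' (abs_lt.mpr ⟨by linarith, hx₁⟩)
  have term_pos (n : ℕ) : 0 < (1 / (n + 1 : ℝ) - c / (n + 2)) * x ^ (n + 1) :=
    mul_pos (one_div_sub_div_pos hc n) (pow_pos hx₀ _)
  exact hasSum_lt (fun n ↦ (term_pos n).le) (term_pos 0) hasSum_zero series

/-- Let `c` be the unique real number satisfying `e^{-c} = c`. Then for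
every real `q > 1`, one has
`(c*q - 1) * log (1 - 1/q) - log c = ∑_{n=1}^∞ (1/n - c/(n+1)) * (1/q)^n`,
and in particular this quantity is positive. -/
theorem axelrod_log_series_identity (c : ℝ) (hc : Real.exp (-c) = c)
    (q : ℝ) (hq : 1 < q) :
    (c * q - 1) * Real.log (1 - 1 / q) - Real.log c =
      ∑' n : ℕ, (1 / (n + 1 : ℝ) - c / (n + 2)) * (1 / q) ^ (n + 1) ∧
    0 < (c * q - 1) * Real.log (1 - 1 / q) - Real.log c := by
  have x_pos : 0 < 1 / q := by positivity
  have x_lt_one : 1 / q < 1 := (div_lt_one (by positivity)).mpr hq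
  have abs_x_lt_one : |1 / q| < 1 := by rwa [abs_of_pos x_pos]
  have log_c : Real.log c = -c := by rw [← Real.log_exp (-c), hc]
  have closed_form : (c * q - 1) * Real.log (1 - 1 / q) - Real.log c =
      (c / (1 / q) - 1) * Real.log (1 - 1 / q) + c := by
    rw [log_c, sub_neg_eq_add, div_div_eq_mul_div, div_one]
  rw [closed_form]
  exact ⟨(hasSum_one_div_sub_div_mul_pow c x_pos.ne' abs_x_lt_one).tsum_eq.symm,
    div_sub_one_mul_log_add_pos (lt_one_of_exp_neg_eq_self hc).le x_pos x_lt_one⟩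
end

section
/- Let c be the unique real number satisfying e^{-c} = c. Then for every real number q > 1, one has (1 - 1/q)^{cq} > c·(1 - 1/q); equivalently, defining ω(q, F) := q·(1 - 1/q)^F - F·(1 - 1/q), one has ω(q, cq) > 0. -/
/-!
The bound `1 - 1/x ≤ log x` at `x = 1 - 1/q` reads `e⁻¹ ≤ (1 - 1/q) ^ (q - 1)`; raising this to a
power `c ≥ 0` gives `e⁻ᶜ (1 - 1/q) ^ c ≤ (1 - 1/q) ^ (c q)`. If `c ≤ e⁻ᶜ` then `c < 1`, so
`(1 - 1/q) ^ c` strictly exceeds `1 - 1/q`.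
-/

lemma lt_one_of_le_exp_neg {c : ℝ} (hc : c ≤ Real.exp (-c)) : c < 1 := by
  by_contra! h
  have : Real.exp (-c) < 1 := Real.exp_lt_one_iff.2 (by linarith)
  linarith

lemma one_sub_one_div_pos {q : ℝ} (hq : 1 < q) : 0 < 1 - 1 / q :=
  sub_pos.2 ((div_lt_one (by positivity)).2 hq)

lemma exp_neg_one_le_one_sub_one_div_rpow_sub_one {q : ℝ} (hq : 1 < q) :
    Real.exp (-1) ≤ (1 - 1 / q) ^ (q - 1) := by
  have hx := one_sub_one_div_pos hq
  have hexp : Real.exp (1 - (1 - 1 / q)⁻¹) ≤ 1 - 1 / q :=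
    (Real.le_log_iff_exp_le hx).1 (Real.one_sub_inv_le_log_of_pos hx)
  have hexponent : (1 - (1 - 1 / q)⁻¹) * (q - 1) = -1 := by
    have : q - 1 ≠ 0 := (sub_pos.2 hq).ne'
    field_simp
    ring
  calc Real.exp (-1) = Real.exp (1 - (1 - 1 / q)⁻¹) ^ (q - 1) := by
        rw [← Real.exp_mul, hexponent]
    _ ≤ (1 - 1 / q) ^ (q - 1) :=
        Real.rpow_le_rpow (Real.exp_nonneg _) hexp (sub_pos.2 hq).le

lemma exp_neg_mul_one_sub_one_div_rpow_le {c q : ℝ} (hc : 0 ≤ c) (hq : 1 < q) :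
    Real.exp (-c) * (1 - 1 / q) ^ c ≤ (1 - 1 / q) ^ (c * q) := by
  have hx := one_sub_one_div_pos hq
  calc Real.exp (-c) * (1 - 1 / q) ^ c = Real.exp (-1) ^ c * (1 - 1 / q) ^ c := by
        rw [← Real.exp_mul, neg_one_mul]
    _ ≤ ((1 - 1 / q) ^ (q - 1)) ^ c * (1 - 1 / q) ^ c := by
        gcongr
        exact exp_neg_one_le_one_sub_one_div_rpow_sub_one hq
    _ = (1 - 1 / q) ^ (c * q) := by
        rw [← Real.rpow_mul hx.le, ← Real.rpow_add hx]
        ring_nf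

lemma mul_one_sub_one_div_lt_rpow {c q : ℝ} (hc : c ≤ Real.exp (-c)) (hq : 1 < q) :
    c * (1 - 1 / q) < (1 - 1 / q) ^ (c * q) := by
  have hx₀ := one_sub_one_div_pos hq
  have hx₁ : 1 - 1 / q < 1 := sub_lt_self 1 (by positivity)
  obtain hneg | hnonneg := lt_or_ge c 0
  · exact (mul_neg_of_neg_of_pos hneg hx₀).trans (Real.rpow_pos_of_pos hx₀ _)
  · calc c * (1 - 1 / q) ≤ Real.exp (-c) * (1 - 1 / q) := by gcongr
      _ < Real.exp (-c) * (1 - 1 / q) ^ c := by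
          gcongr
          exact Real.self_lt_rpow_of_lt_one hx₀ hx₁ (lt_one_of_le_exp_neg hc)
      _ ≤ (1 - 1 / q) ^ (c * q) := exp_neg_mul_one_sub_one_div_rpow_le hnonneg hq

theorem axelrod_omega_pos_at_cq_general {c q : ℝ} (hc : c ≤ Real.exp (-c)) (hq : 1 < q) :
    c * (1 - 1 / q) < (1 - 1 / q) ^ (c * q) ∧
    0 < q * (1 - 1 / q) ^ (c * q) - (c * q) * (1 - 1 / q) := by
  have hlt := mul_one_sub_one_div_lt_rpow hc hq
  refine ⟨hlt, sub_pos.2 ?_⟩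
  calc c * q * (1 - 1 / q) = q * (c * (1 - 1 / q)) := by ring
    _ < q * (1 - 1 / q) ^ (c * q) := by gcongr

/-- Let `c` be the unique real number satisfying `e^{-c} = c`. Then for
every real `q > 1`, one has `(1 - 1/q)^(c*q) > c*(1 - 1/q)`; equivalently, with
`ω(q, F) := q*(1 - 1/q)^F - F*(1 - 1/q)` one has `ω(q, c*q) > 0`. -/
theorem axelrod_omega_pos_at_cq (c : ℝ) (hc : Real.exp (-c) = c)
    (q : ℝ) (hq : 1 < q) :
    c * (1 - 1 / q) < (1 - 1 / q) ^ (c * q) ∧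
    0 < q * (1 - 1 / q) ^ (c * q) - (c * q) * (1 - 1 / q) :=
  axelrod_omega_pos_at_cq_general hc.ge hq
end
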